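/- arXiv:2204.12634 — 2 statements merged into one kernel-verified Lean document; each statement's English description precedes it below -/
import Mathlib

section
/- Fix Θ_* ∈ ℝ^{m×q}, μ > 0, 0 < β < 2, 0 < γ < √((2−β)/β), and suppose α := 2(1−γ) − γ(2−3β)²/(β(2−(1+γ²)β)) > 0. Let (φ_k)_{k≥0} be any sequence in ℝ^q and run the high-order tuner: N_k = max{μ, ‖φ_k‖²}, ε_{k+1} = (Θ̂_k − Θ_*)φ_k, Θ̄_k = Θ̂_k − (γβ/N_k) ε_{k+1} φ_k^⊤, Θ̂_{k+1} = Θ̄_k − β(Θ̄_k − Ξ̂_k), Ξ̂_{k+1} = Ξ̂_k − (γ/N_k)((Θ̂_{k+1} − Θ̂_k)φ_k + ε_{k+1})φ_k^⊤, initialized with Ξ̂_0 = Θ̂_0. Then for all k ≥ 0, ‖Ξ̂_k − Θ_*‖_F² + ‖Θ̂_k − Ξ̂_k‖_F² ≤ ‖Ξ̂_0 − Θ_*‖_F² + ‖Θ̂_0 − Ξ̂_0‖_F²; in particular the parameter error Θ̂_k − Θ_* and the auxiliary estimate Ξ̂_k are bounded uniformly in k. -/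
open scoped BigOperators

/-!
One step of the tuner touches `Θhat - Θstar` only through the operator `R A = N⁻¹ • (A φ) φᵀ`, which
is symmetric with `0 ≤ R ≤ 1` for the Frobenius inner product. With `x = Ξhat - Θstar`,
`u = Θbar - Ξhat`, `e = Θhat - Θstar` and `g` the next parameter error, the decrement of the
Lyapunov function is a sum of terms that are nonnegative because `R² ≤ R ≤ 1`, plus a quadratic form
in `(g, u)` for the semi-inner product `⟪R ·, ·⟫`. The condition `α ≥ 0` says that the discriminant
of this form is nonpositive.
-/

namespace HighOrderTuner

open scoped InnerProductSpace

/-- The gains for which the tuner is stable. The field `discrim_le` is the condition `α ≥ 0` of the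
paper, multiplied by the positive number `β * (2 - (1 + γ ^ 2) * β)`. -/
structure AdmissibleGains (γ β : ℝ) : Prop where
  gamma_nonneg : 0 ≤ γ
  beta_pos : 0 < β
  mul_beta_lt_two : (1 + γ ^ 2) * β < 2
  discrim_le : γ * (2 - 3 * β) ^ 2 ≤ 2 * (1 - γ) * (β * (2 - (1 + γ ^ 2) * β))

namespace AdmissibleGains

variable {γ β : ℝ}

lemma of_lt_sqrt (hβ : 0 < β) (hγ0 : 0 ≤ γ) (hγ : γ < √((2 - β) / β))
    (hα : 0 ≤ 2 * (1 - γ) - γ * (2 - 3 * β) ^ 2 / (β * (2 - (1 + γ ^ 2) * β))) :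
    AdmissibleGains γ β := by
  have hlt : γ ^ 2 * β < 2 - β := (lt_div_iff₀ hβ).1 ((Real.lt_sqrt hγ0).1 hγ)
  have hpos : 0 < β * (2 - (1 + γ ^ 2) * β) := mul_pos hβ (by linarith)
  exact ⟨hγ0, hβ, by linarith, (div_le_iff₀ hpos).1 (sub_nonneg.1 hα)⟩

lemma denom_pos (h : AdmissibleGains γ β) : 0 < β * (2 - (1 + γ ^ 2) * β) :=
  mul_pos h.beta_pos (sub_pos.2 h.mul_beta_lt_two)

lemma beta_lt_two (h : AdmissibleGains γ β) : β < 2 := by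
  nlinarith [h.mul_beta_lt_two, mul_nonneg (sq_nonneg γ) h.beta_pos.le]

end AdmissibleGains

section Lyapunov

variable {E : Type*} [SeminormedAddCommGroup E]

/-- The Lyapunov function of the tuner with true parameter `θstar`, at the parameter estimate `θ`
and the auxiliary estimate `ξ`. -/
def lyapunov (θstar θ ξ : E) : ℝ := ‖ξ - θstar‖ ^ 2 + ‖θ - ξ‖ ^ 2

lemma norm_sub_le_sqrt_lyapunov (θstar θ ξ : E) : ‖θ - θstar‖ ≤ √(2 * lyapunov θstar θ ξ) := by
  refine Real.le_sqrt_of_sq_le ?_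
  calc ‖θ - θstar‖ ^ 2 ≤ (‖ξ - θstar‖ + ‖θ - ξ‖) ^ 2 := by
        gcongr
        rw [add_comm]
        exact norm_sub_le_norm_sub_add_norm_sub θ ξ θstar
    _ ≤ 2 * lyapunov θstar θ ξ := add_sq_le

lemma norm_aux_le_sqrt_lyapunov_add_norm (θstar θ ξ : E) :
    ‖ξ‖ ≤ √(lyapunov θstar θ ξ) + ‖θstar‖ := by
  have herr : ‖ξ - θstar‖ ≤ √(lyapunov θstar θ ξ) :=
    Real.le_sqrt_of_sq_le (le_add_of_nonneg_right (sq_nonneg _))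
  exact (norm_le_norm_sub_add ξ θstar).trans (add_le_add_left herr _)

end Lyapunov

section Operator

variable {H : Type*} [NormedAddCommGroup H] [InnerProductSpace ℝ H] {R : H →ₗ[ℝ] H}

lemma inner_quadratic_nonneg (hR : R.IsPositive) {a b c : ℝ} (hc : 0 < c) (hdisc : b ^ 2 ≤ a * c)
    (v w : H) : 0 ≤ a * ⟪R v, v⟫_ℝ - 2 * b * ⟪R v, w⟫_ℝ + c * ⟪R w, w⟫_ℝ := by
  have hsymm : ⟪R w, v⟫_ℝ = ⟪R v, w⟫_ℝ := by rw [hR.isSymmetric w v, real_inner_comm]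
  have hsquare : c * (a * ⟪R v, v⟫_ℝ - 2 * b * ⟪R v, w⟫_ℝ + c * ⟪R w, w⟫_ℝ)
      = ⟪R (c • w - b • v), c • w - b • v⟫_ℝ + (a * c - b ^ 2) * ⟪R v, v⟫_ℝ := by
    simp only [map_sub, map_smul, inner_sub_left, inner_sub_right, real_inner_smul_left,
      real_inner_smul_right, hsymm]
    ring
  refine nonneg_of_mul_nonneg_right (hsquare ▸ add_nonneg ?_ ?_) hc
  · exact hR.inner_nonneg_left _
  · exact mul_nonneg (sub_nonneg.2 hdisc) (hR.inner_nonneg_left v)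

/-- Symmetric operators with `R² ≤ R`, equivalently `0 ≤ R ≤ 1`: the abstract form of the
normalized regressor `A ↦ N⁻¹ • (A φ) φᵀ`. -/
structure IsPositiveContraction (R : H →ₗ[ℝ] H) : Prop where
  isSymmetric : R.IsSymmetric
  norm_sq_apply_le_inner (v : H) : ‖R v‖ ^ 2 ≤ ⟪R v, v⟫_ℝ

namespace IsPositiveContraction

lemma isPositive (hR : IsPositiveContraction R) : R.IsPositive :=
  ⟨hR.isSymmetric, fun v => (sq_nonneg _).trans (hR.norm_sq_apply_le_inner v)⟩

lemma inner_apply_self_le_norm_sq (hR : IsPositiveContraction R) (v : H) :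
    ⟪R v, v⟫_ℝ ≤ ‖v‖ ^ 2 := by
  nlinarith [hR.norm_sq_apply_le_inner v, real_inner_le_norm (R v) v, sq_nonneg (‖R v‖ - ‖v‖)]

end IsPositiveContraction

lemma lyapunov_decrement_eq (hR : R.IsSymmetric) {γ β : ℝ} {e x u g : H}
    (he : e = x + u + (γ * β) • R e) (hg : g = x + (1 - β) • u) :
    ‖x‖ ^ 2 + ‖e - x‖ ^ 2 - (‖x - γ • R g‖ ^ 2 + ‖(1 - β) • u + γ • R g‖ ^ 2)
      = (2 * γ * (1 - γ) * ⟪R g, g⟫_ℝ - 2 * (γ * (2 - 3 * β)) * ⟪R g, u⟫_ℝ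
          + β * (2 - (1 + γ ^ 2) * β) * ⟪R u, u⟫_ℝ)
        + 2 * γ ^ 2 * (⟪R g, g⟫_ℝ - ‖R g‖ ^ 2) + β * (2 - β) * (‖u‖ ^ 2 - ⟪R u, u⟫_ℝ)
        + 2 * γ * β ^ 2 * ⟪R u, u⟫_ℝ + γ ^ 2 * β ^ 2 * ‖R (e + u)‖ ^ 2
        + γ ^ 2 * β ^ 2 * (⟪R u, u⟫_ℝ - ‖R u‖ ^ 2) := by
  have hx : x = g - (1 - β) • u := eq_sub_of_add_eq hg.symm
  have hex : e - x = u + (γ * β) • R e := by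
    rw [sub_eq_iff_eq_add', ← add_assoc]
    exact he
  have hRgx : ⟪x, R g⟫_ℝ = ⟪R g, g⟫_ℝ - (1 - β) * ⟪R g, u⟫_ℝ := by
    rw [real_inner_comm, hx, inner_sub_right, real_inner_smul_right]
  -- Unfolding the implicit equation for `e` once leaves only the cross term of `‖R (e + u)‖ ^ 2`.
  have hReu : ⟪u, R e⟫_ℝ
      = ⟪R g, u⟫_ℝ + β * ⟪R u, u⟫_ℝ + γ * β * ⟪R e, R u⟫_ℝ := by
    have he' : e = g + β • u + (γ * β) • R e := by
      rw [hg]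
      nth_rewrite 1 [he]
      module
    calc ⟪u, R e⟫_ℝ = ⟪R u, e⟫_ℝ := (hR u e).symm
      _ = ⟪R u, g⟫_ℝ + β * ⟪R u, u⟫_ℝ + γ * β * ⟪R u, R e⟫_ℝ := by
        nth_rewrite 1 [he']
        simp only [inner_add_right, real_inner_smul_right]
      _ = _ := by rw [hR u g, real_inner_comm, real_inner_comm (R e)]
  rw [hex, map_add, norm_add_sq_real u, norm_sub_sq_real, norm_add_sq_real ((1 - β) • u),
    norm_add_sq_real (R e)]
  simp only [norm_smul, mul_pow, Real.norm_eq_abs, sq_abs, real_inner_smul_left,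
    real_inner_smul_right, hRgx, hReu, real_inner_comm (R g) u]
  ring

lemma lyapunov_step_le {γ β : ℝ} (hgains : AdmissibleGains γ β) (hR : IsPositiveContraction R)
    {e x u g : H} (he : e = x + u + (γ * β) • R e) (hg : g = x + (1 - β) • u) :
    ‖x - γ • R g‖ ^ 2 + ‖(1 - β) • u + γ • R g‖ ^ 2 ≤ ‖x‖ ^ 2 + ‖e - x‖ ^ 2 := by
  have hdisc : (γ * (2 - 3 * β)) ^ 2
      ≤ 2 * γ * (1 - γ) * (β * (2 - (1 + γ ^ 2) * β)) := by
    linarith [mul_le_mul_of_nonneg_left hgains.discrim_le hgains.gamma_nonneg]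
  have hform := inner_quadratic_nonneg hR.isPositive hgains.denom_pos hdisc g u
  have hRg := sub_nonneg.2 (hR.norm_sq_apply_le_inner g)
  have hRu := sub_nonneg.2 (hR.norm_sq_apply_le_inner u)
  have hu := sub_nonneg.2 (hR.inner_apply_self_le_norm_sq u)
  have hRuu : 0 ≤ ⟪R u, u⟫_ℝ := hR.isPositive.inner_nonneg_left u
  have hγ := hgains.gamma_nonneg
  have hβ := hgains.beta_pos
  have hβ2 := sub_pos.2 hgains.beta_lt_two
  rw [← sub_nonneg, lyapunov_decrement_eq hR.isSymmetric he hg]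
  positivity

/-- The sequences generated by the tuner, for an operator `R k` in place of the normalized regressor
`A ↦ (N k)⁻¹ • (A (φ k)) (φ k)ᵀ`; the prediction error `ε` is absorbed into `R k`. -/
structure IsTrajectory (γ β : ℝ) (θstar : H) (R : ℕ → H →ₗ[ℝ] H) (θ θbar ξ : ℕ → H) : Prop where
  bar_eq (k : ℕ) : θbar k = θ k - (γ * β) • R k (θ k - θstar)
  param_succ (k : ℕ) : θ (k + 1) = θbar k - β • (θbar k - ξ k)
  aux_succ (k : ℕ) : ξ (k + 1) = ξ k - γ • R k (θ (k + 1) - θstar)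

namespace IsTrajectory

variable {γ β : ℝ} {θstar : H} {R : ℕ → H →ₗ[ℝ] H} {θ θbar ξ : ℕ → H}

lemma lyapunov_succ_le (h : IsTrajectory γ β θstar R θ θbar ξ) (hgains : AdmissibleGains γ β)
    (hR : ∀ k, IsPositiveContraction (R k)) (k : ℕ) :
    lyapunov θstar (θ (k + 1)) (ξ (k + 1)) ≤ lyapunov θstar (θ k) (ξ k) := by
  set e := θ k - θstar with he_def
  set x := ξ k - θstar with hx_def
  set u := θbar k - ξ k with hu_def
  set g := θ (k + 1) - θstar with hg_def
  have he : e = x + u + (γ * β) • R k e := by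
    rw [hx_def, hu_def, h.bar_eq, he_def]
    abel
  have hg : g = x + (1 - β) • u := by
    rw [hg_def, h.param_succ, hx_def, hu_def]
    module
  have haux : ξ (k + 1) - θstar = x - γ • R k g := by
    rw [h.aux_succ, hx_def]
    abel
  have hgap : θ (k + 1) - ξ (k + 1) = (1 - β) • u + γ • R k g := by
    rw [← sub_sub_sub_cancel_right _ _ θstar, haux, ← hg_def, hg]
    abel
  rw [lyapunov, lyapunov, haux, hgap, ← hx_def, ← sub_sub_sub_cancel_right (θ k) _ θstar]
  exact lyapunov_step_le hgains (hR k) he hg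

theorem lyapunov_le_initial (h : IsTrajectory γ β θstar R θ θbar ξ) (hgains : AdmissibleGains γ β)
    (hR : ∀ k, IsPositiveContraction (R k)) (k : ℕ) :
    lyapunov θstar (θ k) (ξ k) ≤ lyapunov θstar (θ 0) (ξ 0) :=
  antitone_nat_of_succ_le (f := fun k => lyapunov θstar (θ k) (ξ k))
    (h.lyapunov_succ_le hgains hR) k.zero_le

theorem exists_norm_le (h : IsTrajectory γ β θstar R θ θbar ξ) (hgains : AdmissibleGains γ β)
    (hR : ∀ k, IsPositiveContraction (R k)) : ∃ C, ∀ k, ‖θ k - θstar‖ ≤ C ∧ ‖ξ k‖ ≤ C := by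
  refine ⟨max (√(2 * lyapunov θstar (θ 0) (ξ 0))) (√(lyapunov θstar (θ 0) (ξ 0)) + ‖θstar‖),
    fun k => ⟨le_max_of_le_left ?_, le_max_of_le_right ?_⟩⟩
  · refine (norm_sub_le_sqrt_lyapunov θstar (θ k) (ξ k)).trans ?_
    gcongr
    exact h.lyapunov_le_initial hgains hR k
  · refine (norm_aux_le_sqrt_lyapunov_add_norm θstar (θ k) (ξ k)).trans ?_
    gcongr
    exact h.lyapunov_le_initial hgains hR k

end IsTrajectory

end Operator

section Frobenius

open Matrix
open scoped Matrix.Norms.Frobenius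

variable {m n : Type*} [Fintype n]

/-- The normalized regressor `A ↦ N⁻¹ • (A φ) φᵀ`, which drives both updates of the tuner. -/
noncomputable def normalizedRegressor (φ : n → ℝ) (N : ℝ) : Matrix m n ℝ →ₗ[ℝ] Matrix m n ℝ :=
  N⁻¹ • (vecMulVecBilin ℝ ℝ).flip φ ∘ₗ (mulVecBilin ℝ ℝ).flip φ

lemma normalizedRegressor_apply (φ : n → ℝ) (N : ℝ) (A : Matrix m n ℝ) :
    normalizedRegressor φ N A = N⁻¹ • vecMulVec (A *ᵥ φ) φ := rfl

variable [Fintype m]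

lemma frobenius_norm_sq_eq_sum (A : Matrix m n ℝ) : ‖A‖ ^ 2 = ∑ i, ∑ j, A i j ^ 2 := by
  have hnonneg : 0 ≤ ∑ i, ∑ j, A i j ^ 2 := by positivity
  simp only [frobenius_norm_def, Real.norm_eq_abs, Real.rpow_two, sq_abs, ← Real.sqrt_eq_rpow,
    Real.sq_sqrt hnonneg]

lemma frobenius_norm_eq_sqrt_sum (A : Matrix m n ℝ) : ‖A‖ = √(∑ i, ∑ j, A i j ^ 2) := by
  rw [← frobenius_norm_sq_eq_sum, Real.sqrt_sq (norm_nonneg A)]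

/-- The Frobenius inner product on real matrices, inducing Mathlib's Frobenius norm. Like that norm
it is only a local instance. -/
@[reducible]
noncomputable def frobeniusInnerProductSpace : InnerProductSpace ℝ (Matrix m n ℝ) where
  inner A B := ∑ i, ∑ j, A i j * B i j
  norm_sq_eq_re_inner A := by
    rw [frobenius_norm_sq_eq_sum]
    simp only [sq, RCLike.re_to_real]
  conj_inner_symm A B := by simp only [mul_comm, conj_trivial]
  add_left A B C := by simp only [Matrix.add_apply, add_mul, Finset.sum_add_distrib]
  smul_left A B r := by
    simp only [Matrix.smul_apply, smul_eq_mul, mul_assoc, Finset.mul_sum, conj_trivial]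

attribute [local instance] frobeniusInnerProductSpace

lemma inner_vecMulVec_left (w : m → ℝ) (φ : n → ℝ) (A : Matrix m n ℝ) :
    ⟪vecMulVec w φ, A⟫_ℝ = w ⬝ᵥ A *ᵥ φ := by
  change ∑ i, ∑ j, w i * φ j * A i j = ∑ i, w i * ∑ j, A i j * φ j
  simp only [Finset.mul_sum, mul_assoc, mul_comm (φ _)]

lemma norm_vecMulVec_sq (w : m → ℝ) (φ : n → ℝ) :
    ‖vecMulVec w φ‖ ^ 2 = (w ⬝ᵥ w) * (φ ⬝ᵥ φ) := by
  rw [← real_inner_self_eq_norm_sq, inner_vecMulVec_left, vecMulVec_mulVec, dotProduct_smul]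
  simp

lemma isPositiveContraction_normalizedRegressor {φ : n → ℝ} {N : ℝ} (hN : 0 < N)
    (hφN : ∑ j, φ j ^ 2 ≤ N) :
    IsPositiveContraction (normalizedRegressor φ N : Matrix m n ℝ →ₗ[ℝ] Matrix m n ℝ) where
  isSymmetric A B := by
    rw [normalizedRegressor_apply, normalizedRegressor_apply, real_inner_smul_left,
      real_inner_smul_right, inner_vecMulVec_left, real_inner_comm, inner_vecMulVec_left,
      dotProduct_comm]
  norm_sq_apply_le_inner A := by
    have hratio : N⁻¹ * (φ ⬝ᵥ φ) ≤ 1 := by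
      rw [inv_mul_le_one₀ hN]
      simpa only [dotProduct, ← sq] using hφN
    have hAφ : 0 ≤ A *ᵥ φ ⬝ᵥ A *ᵥ φ := Finset.sum_nonneg fun i _ => mul_self_nonneg _
    calc ‖normalizedRegressor φ N A‖ ^ 2
        = N⁻¹ * (A *ᵥ φ ⬝ᵥ A *ᵥ φ) * (N⁻¹ * (φ ⬝ᵥ φ)) := by
          rw [normalizedRegressor_apply, norm_smul, mul_pow, norm_vecMulVec_sq, Real.norm_eq_abs,
            sq_abs]
          ring
      _ ≤ N⁻¹ * (A *ᵥ φ ⬝ᵥ A *ᵥ φ) := mul_le_of_le_one_right (by positivity) hratio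
      _ = ⟪normalizedRegressor φ N A, A⟫_ℝ := by
          rw [normalizedRegressor_apply, real_inner_smul_left, inner_vecMulVec_left]

lemma lyapunov_eq_sum (Θstar Θ Ξ : Matrix m n ℝ) :
    lyapunov Θstar Θ Ξ = ∑ i, ∑ j, (Ξ - Θstar) i j ^ 2 + ∑ i, ∑ j, (Θ - Ξ) i j ^ 2 := by
  rw [lyapunov, frobenius_norm_sq_eq_sum, frobenius_norm_sq_eq_sum]

lemma isTrajectory_normalizedRegressor {Θstar : Matrix m n ℝ} {γ β : ℝ} {φ : ℕ → n → ℝ}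
    {Θhat Ξhat Θbar : ℕ → Matrix m n ℝ} {N : ℕ → ℝ} {ε : ℕ → m → ℝ}
    (hε : ∀ k, ε (k + 1) = (Θhat k - Θstar) *ᵥ φ k)
    (hΘbar : ∀ k, Θbar k = Θhat k - (γ * β / N k) • vecMulVec (ε (k + 1)) (φ k))
    (hΘ : ∀ k, Θhat (k + 1) = Θbar k - β • (Θbar k - Ξhat k))
    (hΞ : ∀ k, Ξhat (k + 1) = Ξhat k
      - (γ / N k) • vecMulVec ((Θhat (k + 1) - Θhat k) *ᵥ φ k + ε (k + 1)) (φ k)) :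
    IsTrajectory γ β Θstar (fun k => normalizedRegressor (φ k) (N k)) Θhat Θbar Ξhat where
  bar_eq k := by rw [hΘbar, hε, normalizedRegressor_apply, smul_smul, div_eq_mul_inv]
  param_succ := hΘ
  aux_succ k := by
    rw [hΞ, hε, ← add_mulVec, sub_add_sub_cancel, normalizedRegressor_apply, smul_smul,
      div_eq_mul_inv]

end Frobenius

end HighOrderTuner

section General

open HighOrderTuner Matrix
open scoped Matrix.Norms.Frobenius

attribute [local instance] frobeniusInnerProductSpace

theorem hot_parameter_error_bounded_general {m n : Type*} [Fintype m] [Fintype n]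
    {Θstar : Matrix m n ℝ} {γ β : ℝ} (hgains : AdmissibleGains γ β)
    {φ : ℕ → n → ℝ} {Θhat Ξhat Θbar : ℕ → Matrix m n ℝ}
    {N : ℕ → ℝ} (hN : ∀ k, 0 < N k) (hφN : ∀ k, ∑ j, φ k j ^ 2 ≤ N k)
    {ε : ℕ → m → ℝ} (hε : ∀ k, ε (k + 1) = (Θhat k - Θstar) *ᵥ φ k)
    (hΘbar : ∀ k, Θbar k = Θhat k - (γ * β / N k) • vecMulVec (ε (k + 1)) (φ k))
    (hΘ : ∀ k, Θhat (k + 1) = Θbar k - β • (Θbar k - Ξhat k))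
    (hΞ : ∀ k, Ξhat (k + 1) = Ξhat k
      - (γ / N k) • vecMulVec ((Θhat (k + 1) - Θhat k) *ᵥ φ k + ε (k + 1)) (φ k)) :
    (∀ k, (∑ i, ∑ j, (Ξhat k - Θstar) i j ^ 2) + (∑ i, ∑ j, (Θhat k - Ξhat k) i j ^ 2)
        ≤ (∑ i, ∑ j, (Ξhat 0 - Θstar) i j ^ 2) + (∑ i, ∑ j, (Θhat 0 - Ξhat 0) i j ^ 2)) ∧
      ∃ C : ℝ, ∀ k, √(∑ i, ∑ j, (Θhat k - Θstar) i j ^ 2) ≤ C ∧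
        √(∑ i, ∑ j, Ξhat k i j ^ 2) ≤ C := by
  have htraj := isTrajectory_normalizedRegressor hε hΘbar hΘ hΞ
  have hR (k : ℕ) := isPositiveContraction_normalizedRegressor (m := m) (hN k) (hφN k)
  simp only [← lyapunov_eq_sum, ← frobenius_norm_eq_sqrt_sum]
  exact ⟨htraj.lyapunov_le_initial hgains hR, htraj.exists_norm_le hgains hR⟩

end General

/-- along the high-order tuner, the Lyapunov function
    ‖Ξ̂_k − Θ_*‖_F² + ‖Θ̂_k − Ξ̂_k‖_F² never exceeds its initial value; in
    particular the parameter error Θ̂_k − Θ_* and the auxiliary estimate Ξ̂_k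
    are bounded uniformly in k. -/
theorem hot_parameter_error_bounded {m q : ℕ}
    (Θstar : Matrix (Fin m) (Fin q) ℝ) (μ γ β : ℝ)
    (hμ : 0 < μ) (hβ0 : 0 < β) (hβ2 : β < 2)
    (hγ0 : 0 < γ) (hγ : γ < Real.sqrt ((2 - β) / β))
    (hα : 0 < 2 * (1 - γ) - γ * (2 - 3 * β) ^ 2 / (β * (2 - (1 + γ ^ 2) * β)))
    (φ : ℕ → Fin q → ℝ)
    (Θhat Ξhat Θbar : ℕ → Matrix (Fin m) (Fin q) ℝ)
    (N : ℕ → ℝ) (hN : ∀ k, N k = max μ (∑ j, φ k j ^ 2))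
    (ε : ℕ → Fin m → ℝ) (hε : ∀ k, ε (k + 1) = (Θhat k - Θstar).mulVec (φ k))
    (hΘbar : ∀ k, Θbar k
      = Θhat k - (γ * β / N k) • Matrix.vecMulVec (ε (k + 1)) (φ k))
    (hΘ : ∀ k, Θhat (k + 1) = Θbar k - β • (Θbar k - Ξhat k))
    (hΞ : ∀ k, Ξhat (k + 1) = Ξhat k - (γ / N k) • Matrix.vecMulVec
      ((Θhat (k + 1) - Θhat k).mulVec (φ k) + ε (k + 1)) (φ k))
    (hinit : Ξhat 0 = Θhat 0) :
    (∀ k, (∑ i, ∑ j, (Ξhat k - Θstar) i j ^ 2)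
          + (∑ i, ∑ j, (Θhat k - Ξhat k) i j ^ 2)
        ≤ (∑ i, ∑ j, (Ξhat 0 - Θstar) i j ^ 2)
          + (∑ i, ∑ j, (Θhat 0 - Ξhat 0) i j ^ 2)) ∧
      ∃ C : ℝ, ∀ k,
        Real.sqrt (∑ i, ∑ j, (Θhat k - Θstar) i j ^ 2) ≤ C ∧
        Real.sqrt (∑ i, ∑ j, (Ξhat k) i j ^ 2) ≤ C :=
  hot_parameter_error_bounded_general (.of_lt_sqrt hβ0 hγ0.le hγ hα.le)
    (fun k => hN k ▸ lt_max_of_lt_left hμ) (fun k => hN k ▸ le_max_right _ _) hε hΘbar hΘ hΞ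
end

section
/- Consider the plant x_{p(k+1)} = A_p x_{pk} + B(Σ_{i=1}^p a_i f_i(x_{pk}) + u_k) with A_p ∈ ℝ^{n×n}, B ∈ ℝ^{n×m} of full column rank, a_i ∈ ℝ^m, and each f_i : ℝ^n → ℝ globally Lipschitz with f_i(0) = 0. Suppose A_m ∈ ℝ^{n×n} has spectral radius < 1 and satisfies the matching condition A_m = A_p + B K_* for some K_* ∈ ℝ^{m×n}, and the reference model is x_{m(k+1)} = A_m x_{mk} + B r_k with ‖r_k‖ ≤ r_max for all k. Let φ_k = (x_{pk}, −f_1(x_{pk}), ..., −f_p(x_{pk})) ∈ ℝ^{n+p}, let the control be u_k = Θ̂_k φ_k + r_k, the tracking error e_k = x_{pk} − x_{mk}, the prediction error ε_{k+1} = (B^⊤B)^{−1}B^⊤(e_{k+1} − A_m e_k), and update the parameter estimate by the high-order tuner: N_k = max{μ, ‖φ_k‖²}, Θ̄_k = Θ̂_k − (γβ/N_k) ε_{k+1} φ_k^⊤, Θ̂_{k+1} = Θ̄_k − β(Θ̄_k − Ξ̂_k), Ξ̂_{k+1} = Ξ̂_k − (γ/N_k)((Θ̂_{k+1} − Θ̂_k)φ_k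 + ε_{k+1})φ_k^⊤, with Ξ̂_0 = Θ̂_0 arbitrary, μ > 0, 0 < β < 2, 0 < γ < √((2−β)/β), and α := 2(1−γ) − γ(2−3β)²/(β(2−(1+γ²)β)) > 0. Then lim_{k→∞} ‖e_k‖ = 0. -/
open scoped BigOperators
open Matrix

/-!
Write every error relative to the true parameter `Θ⋆`. Row by row, the prediction error is
`s = ⟪θ, φ⟫`, and the function `V = ‖ξ‖² + ‖θ - ξ‖²` of the estimate `θ` and the auxiliary
estimate `ξ` decreases along the tuner: with `t = ⟪θ⁺, φ⟫` the a posteriori error,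
`w = ⟪θ̄ - ξ, φ⟫` and `g = γ ‖φ‖² / N`,
`V⁺ - V ≤ -(γ / N) (α t² + 2 β² w² + g β² (s + w)²)`.
Since `s = t + (1 - g) β w + g β (s + w)`, the right-hand side dominates a multiple of `s² / N`,
so the normalized prediction error is square summable and tends to zero. The tracking error obeys
`e⁺ = A_m e + B ε` and the normalization grows at most affinely with `e`; hence `B ε` is a
vanishing relative perturbation of a stable linear system, and `e` tends to zero.
-/

open Filter Topology
open WithLp (toLp)
open scoped RealInnerProductSpace

theorem summable_of_forall_le_sub {V q : ℕ → ℝ} (hV : ∀ k, 0 ≤ V k) (hq : ∀ k, 0 ≤ q k)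
    (hVq : ∀ k, V (k + 1) ≤ V k - q k) : Summable q := by
  refine summable_of_sum_range_le (c := V 0) hq fun n => ?_
  calc ∑ i ∈ Finset.range n, q i ≤ ∑ i ∈ Finset.range n, (V i - V (i + 1)) :=
        Finset.sum_le_sum fun i _ => by linarith [hVq i]
    _ = V 0 - V n := Finset.sum_range_sub' V n
    _ ≤ V 0 := sub_le_self _ (hV n)

/-- The decrease rate `α` of the squared a posteriori error along the high-order tuner with gains
`γ` and `β`. -/
noncomputable def tunerRate (γ β : ℝ) : ℝ :=
  2 * (1 - γ) - γ * (2 - 3 * β) ^ 2 / (β * (2 - (1 + γ ^ 2) * β))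

theorem lt_one_of_tunerRate_pos {γ β : ℝ} (hγ : 0 ≤ γ) (hβ : 0 < β)
    (hD : (1 + γ ^ 2) * β < 2) (hα : 0 < tunerRate γ β) : γ < 1 := by
  have : 0 < β * (2 - (1 + γ ^ 2) * β) := mul_pos hβ (by linarith)
  have hquot : 0 ≤ γ * (2 - 3 * β) ^ 2 / (β * (2 - (1 + γ ^ 2) * β)) := by positivity
  unfold tunerRate at hα
  linarith

theorem one_add_sq_mul_lt_two {γ β : ℝ} (hγ0 : 0 ≤ γ) (hβ : 0 < β) (hγ : γ < √((2 - β) / β)) :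
    (1 + γ ^ 2) * β < 2 := by
  have h := (Real.lt_sqrt hγ0).1 hγ
  rw [lt_div_iff₀ hβ] at h
  linarith

section Tuner

variable {E : Type*} [SeminormedAddCommGroup E] [InnerProductSpace ℝ E]

/-- The intermediate estimate `Θ̄` of the high-order tuner with normalization `N`, for a scalar
output. Estimates are measured relative to the true parameter, so that `⟪θ, φ⟫` is the prediction
error. -/
noncomputable def tunerIntermediate (γ β N : ℝ) (φ θ : E) : E :=
  θ - (γ * β / N * ⟪θ, φ⟫) • φ

/-- The next parameter estimate of the high-order tuner, relative to the true parameter. -/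
noncomputable def tunerEstimate (γ β N : ℝ) (φ θ ξ : E) : E :=
  tunerIntermediate γ β N φ θ - β • (tunerIntermediate γ β N φ θ - ξ)

/-- The next auxiliary estimate of the high-order tuner, relative to the true parameter. It uses the
a posteriori error, to which the paper's `(Θ̂ₖ₊₁ - Θ̂ₖ) φₖ + εₖ₊₁` simplifies. -/
noncomputable def tunerAuxiliary (γ β N : ℝ) (φ θ ξ : E) : E :=
  ξ - (γ / N * ⟪tunerEstimate γ β N φ θ ξ, φ⟫) • φ

/-- The Lyapunov function of the high-order tuner, in the errors of the parameter estimate and of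
the auxiliary estimate. -/
noncomputable def tunerLyapunov (θ ξ : E) : ℝ := ‖ξ‖ ^ 2 + ‖θ - ξ‖ ^ 2

theorem inner_tunerEstimate (γ β N : ℝ) (φ θ ξ : E) :
    ⟪tunerEstimate γ β N φ θ ξ, φ⟫ = ⟪θ, φ⟫ * (1 - γ / N * ‖φ‖ ^ 2 * β)
      - β * ⟪tunerIntermediate γ β N φ θ - ξ, φ⟫ := by
  simp only [tunerEstimate, tunerIntermediate, inner_sub_left, real_inner_smul_left,
    real_inner_self_eq_norm_sq]
  ring

theorem tunerLyapunov_step_sub (γ β N : ℝ) (φ θ ξ : E) {c g s t w : ℝ}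
    (hc : c = γ / N) (hg : g = c * ‖φ‖ ^ 2) (hs : s = ⟪θ, φ⟫)
    (ht : t = ⟪tunerEstimate γ β N φ θ ξ, φ⟫)
    (hw : w = ⟪tunerIntermediate γ β N φ θ - ξ, φ⟫) :
    tunerLyapunov (tunerEstimate γ β N φ θ ξ) (tunerAuxiliary γ β N φ θ ξ)
        - tunerLyapunov θ ξ =
      -2 * c * (1 - g) * t ^ 2 + 2 * c * (2 - 3 * β) * t * w
        - β * (2 - β) * ‖tunerIntermediate γ β N φ θ - ξ‖ ^ 2
        + c * g * β ^ 2 * w ^ 2 - 2 * c * β ^ 2 * w ^ 2 - c * g * β ^ 2 * (s + w) ^ 2 := by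
  have hts := inner_tunerEstimate γ β N φ θ ξ
  rw [← ht, ← hs, ← hw, ← hc, ← hg] at hts
  set d := tunerIntermediate γ β N φ θ - ξ with hd
  have hθ' : tunerEstimate γ β N φ θ ξ = ξ + (1 - β) • d := by
    rw [tunerEstimate, ← hd, eq_add_of_sub_eq' hd.symm]
    module
  have hξ' : tunerAuxiliary γ β N φ θ ξ = ξ - (c * t) • φ := by rw [tunerAuxiliary, ← ht, hc]
  have hθ : θ - ξ = d + (c * β * s) • φ := by
    rw [hd, tunerIntermediate, ← hs, hc, mul_div_right_comm]
    abel
  have hξφ : ⟪ξ, φ⟫ = t - (1 - β) * w := by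
    rw [ht, hθ', inner_add_left, real_inner_smul_left, ← hw]
    ring
  have hdiff : tunerEstimate γ β N φ θ ξ - tunerAuxiliary γ β N φ θ ξ
      = (1 - β) • d + (c * t) • φ := by
    rw [hθ', hξ']
    abel
  rw [tunerLyapunov, tunerLyapunov, hdiff, hξ', hθ]
  simp only [norm_sub_sq_real, norm_add_sq_real, real_inner_smul_left, real_inner_smul_right,
    norm_smul, mul_pow, Real.norm_eq_abs, sq_abs, hξφ, ← hw]
  subst hg
  linear_combination (2 * c * β * w) * hts

theorem two_mul_mul_mul_le_add_mul_sq {γ δ : ℝ} (hγ : 0 < γ) (hδ : 0 < δ) (b t w : ℝ) :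
    2 * b * t * w ≤ γ * b ^ 2 / δ * t ^ 2 + δ / γ * w ^ 2 := by
  calc 2 * b * t * w = 2 * (b * t) * w := by ring
    _ ≤ γ / δ * (b * t) ^ 2 + (γ / δ)⁻¹ * w ^ 2 := two_mul_le_add_mul_sq (div_pos hγ hδ)
    _ = γ * b ^ 2 / δ * t ^ 2 + δ / γ * w ^ 2 := by rw [inv_div]; ring

theorem mul_inner_sq_le {γ N : ℝ} (hγ : 0 ≤ γ) {φ : E} (hN : 0 < N) (hφN : ‖φ‖ ^ 2 ≤ N) (d : E) :
    γ / N * ⟪d, φ⟫ ^ 2 ≤ γ * ‖d‖ ^ 2 := by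
  have hcs : ⟪d, φ⟫ ^ 2 ≤ ‖d‖ ^ 2 * N := by
    rw [← sq_abs]
    grw [abs_real_inner_le_norm, mul_pow, hφN]
  grw [hcs]
  exact (by field_simp : γ / N * (‖d‖ ^ 2 * N) = γ * ‖d‖ ^ 2).le

theorem tunerLyapunov_step_le {γ β N : ℝ} (hγ : 0 < γ) (hβ : 0 < β)
    (hD : (1 + γ ^ 2) * β < 2) {φ : E} (hN : 0 < N) (hφN : ‖φ‖ ^ 2 ≤ N) (θ ξ : E)
    {c g s t w : ℝ} (hc : c = γ / N) (hg : g = c * ‖φ‖ ^ 2) (hs : s = ⟪θ, φ⟫)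
    (ht : t = ⟪tunerEstimate γ β N φ θ ξ, φ⟫)
    (hw : w = ⟪tunerIntermediate γ β N φ θ - ξ, φ⟫) :
    tunerLyapunov (tunerEstimate γ β N φ θ ξ) (tunerAuxiliary γ β N φ θ ξ) ≤ tunerLyapunov θ ξ
      - c * (tunerRate γ β * t ^ 2 + 2 * β ^ 2 * w ^ 2 + g * β ^ 2 * (s + w) ^ 2) := by
  have hstep := tunerLyapunov_step_sub γ β N φ θ ξ hc hg hs ht hw
  set d := tunerIntermediate γ β N φ θ - ξ
  set δ := β * (2 - (1 + γ ^ 2) * β) with hδ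
  have hδ0 : 0 < δ := mul_pos hβ (by linarith)
  have hc0 : 0 < c := hc ▸ div_pos hγ hN
  have hgγ : g ≤ γ := by
    grw [hg, hφN, hc, div_mul_cancel₀ γ hN.ne']
  have hcw : c * w ^ 2 ≤ γ * ‖d‖ ^ 2 := hc ▸ hw ▸ mul_inner_sq_le hγ.le hN hφN d
  have hcross : c * (2 * (2 - 3 * β) * t * w)
      ≤ c * (γ * (2 - 3 * β) ^ 2 / δ) * t ^ 2 + δ * ‖d‖ ^ 2 := by
    calc c * (2 * (2 - 3 * β) * t * w)
        ≤ c * (γ * (2 - 3 * β) ^ 2 / δ * t ^ 2 + δ / γ * w ^ 2) := by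
          gcongr
          exact two_mul_mul_mul_le_add_mul_sq hγ hδ0 _ t w
      _ = c * (γ * (2 - 3 * β) ^ 2 / δ) * t ^ 2 + δ / γ * (c * w ^ 2) := by ring
      _ ≤ c * (γ * (2 - 3 * β) ^ 2 / δ) * t ^ 2 + δ / γ * (γ * ‖d‖ ^ 2) := by gcongr
      _ = c * (γ * (2 - 3 * β) ^ 2 / δ) * t ^ 2 + δ * ‖d‖ ^ 2 := by field_simp
  have hgw : g * β ^ 2 * (c * w ^ 2) ≤ γ * β ^ 2 * (γ * ‖d‖ ^ 2) := by gcongr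
  have hgt : c * g * t ^ 2 ≤ c * γ * t ^ 2 := by gcongr
  have : δ * ‖d‖ ^ 2 = (β * (2 - (1 + γ ^ 2) * β)) * ‖d‖ ^ 2 := by rw [hδ]
  rw [tunerRate, ← hδ]
  linarith

theorem min_div_three_mul_sq_le {α β g s t w : ℝ} (hα : 0 < α) (hg0 : 0 ≤ g) (hg1 : g ≤ 1)
    (hts : t = s * (1 - g * β) - β * w) :
    min α 1 / 3 * s ^ 2 ≤ α * t ^ 2 + 2 * β ^ 2 * w ^ 2 + g * β ^ 2 * (s + w) ^ 2 := by
  have hs : s = t + (1 - g) * (β * w) + g * (β * (s + w)) := by rw [hts]; ring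
  have hsq : s ^ 2 ≤ 3 * (t ^ 2 + ((1 - g) * (β * w)) ^ 2 + (g * (β * (s + w))) ^ 2) := by
    simpa [Fin.sum_univ_three, ← hs] using sq_sum_le_card_mul_sum_sq (s := Finset.univ)
      (f := ![t, (1 - g) * (β * w), g * (β * (s + w))])
  have hw : ((1 - g) * (β * w)) ^ 2 ≤ (β * w) ^ 2 := by
    rw [mul_pow]
    exact mul_le_of_le_one_left (sq_nonneg _) (pow_le_one₀ (by linarith) (by linarith))
  have hsw : (g * (β * (s + w))) ^ 2 ≤ g * (β * (s + w)) ^ 2 := by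
    rw [mul_pow]
    gcongr
    exact sq_le hg0 hg1
  have : 0 < min α 1 := lt_min hα one_pos
  calc min α 1 / 3 * s ^ 2
      ≤ min α 1 / 3 * (3 * (t ^ 2 + (β * w) ^ 2 + g * (β * (s + w)) ^ 2)) := by
        grw [hsq, hw, hsw]
    _ = min α 1 * t ^ 2 + min α 1 * ((β * w) ^ 2 + g * (β * (s + w)) ^ 2) := by ring
    _ ≤ α * t ^ 2 + 1 * ((β * w) ^ 2 + g * (β * (s + w)) ^ 2) := by
        gcongr
        exacts [min_le_left _ _, min_le_right _ _]
    _ ≤ α * t ^ 2 + 2 * β ^ 2 * w ^ 2 + g * β ^ 2 * (s + w) ^ 2 := by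
        linarith [sq_nonneg (β * w)]

theorem tunerLyapunov_step_le_sub_inner_sq {γ β N : ℝ} (hγ : 0 < γ) (hβ : 0 < β)
    (hD : (1 + γ ^ 2) * β < 2) (hα : 0 < tunerRate γ β) {φ : E} (hN : 0 < N)
    (hφN : ‖φ‖ ^ 2 ≤ N) (θ ξ : E) :
    tunerLyapunov (tunerEstimate γ β N φ θ ξ) (tunerAuxiliary γ β N φ θ ξ) ≤ tunerLyapunov θ ξ
      - γ * (min (tunerRate γ β) 1 / 3) * (⟪θ, φ⟫ ^ 2 / N) := by
  have hγ1 := lt_one_of_tunerRate_pos hγ.le hβ hD hα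
  have hg1 : γ / N * ‖φ‖ ^ 2 ≤ 1 := by
    grw [hφN, div_mul_cancel₀ γ hN.ne', hγ1]
  have hsq := min_div_three_mul_sq_le hα (by positivity) hg1 (inner_tunerEstimate γ β N φ θ ξ)
  grw [tunerLyapunov_step_le hγ hβ hD hN hφN θ ξ rfl rfl rfl rfl rfl, ← hsq]
  exact (by ring : _ = _).le

theorem tendsto_inner_sq_div_of_tuner {γ β : ℝ} (hγ : 0 < γ) (hβ : 0 < β)
    (hD : (1 + γ ^ 2) * β < 2) (hα : 0 < tunerRate γ β) {N : ℕ → ℝ} {φ θ ξ : ℕ → E}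
    (hN : ∀ k, 0 < N k) (hφN : ∀ k, ‖φ k‖ ^ 2 ≤ N k)
    (hθ : ∀ k, θ (k + 1) = tunerEstimate γ β (N k) (φ k) (θ k) (ξ k))
    (hξ : ∀ k, ξ (k + 1) = tunerAuxiliary γ β (N k) (φ k) (θ k) (ξ k)) :
    Tendsto (fun k => ⟪θ k, φ k⟫ ^ 2 / N k) atTop (𝓝 0) := by
  have hκ : 0 < γ * (min (tunerRate γ β) 1 / 3) := by positivity
  have hsum := summable_of_forall_le_sub (V := fun k => tunerLyapunov (θ k) (ξ k))
    (q := fun k => γ * (min (tunerRate γ β) 1 / 3) * (⟪θ k, φ k⟫ ^ 2 / N k))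
    (fun k => by unfold tunerLyapunov; positivity)
    (fun k => mul_nonneg hκ.le (div_nonneg (sq_nonneg _) (hN k).le))
    (fun k => by
      rw [hθ, hξ]
      exact tunerLyapunov_step_le_sub_inner_sq hγ hβ hD hα (hN k) (hφN k) _ _)
  exact ((summable_mul_left_iff hκ.ne').1 hsum).tendsto_atTop_zero

end Tuner

theorem le_pow_mul_add_div_of_le_mul_add {w : ℕ → ℝ} {l c : ℝ} (hl0 : 0 ≤ l) (hl1 : l < 1)
    (hw : ∀ k, w (k + 1) ≤ l * w k + c) (k : ℕ) :
    w k ≤ l ^ k * (w 0 - c / (1 - l)) + c / (1 - l) := by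
  have hfix : l * (c / (1 - l)) + c = c / (1 - l) := by
    field_simp [(sub_pos.2 hl1).ne']
    ring
  induction k with
  | zero => simp
  | succ k ih =>
    calc w (k + 1) ≤ l * (l ^ k * (w 0 - c / (1 - l)) + c / (1 - l)) + c := by grw [hw k, ih]
      _ = l ^ (k + 1) * (w 0 - c / (1 - l)) + (l * (c / (1 - l)) + c) := by ring
      _ = l ^ (k + 1) * (w 0 - c / (1 - l)) + c / (1 - l) := by rw [hfix]

theorem tendsto_zero_of_le_mul_add {w δ : ℕ → ℝ} {l : ℝ} (hl0 : 0 ≤ l) (hl1 : l < 1)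
    (hw0 : ∀ k, 0 ≤ w k) (hδ : Tendsto δ atTop (𝓝 0))
    (hw : ∀ k, w (k + 1) ≤ l * w k + δ k * (1 + w k)) : Tendsto w atTop (𝓝 0) := by
  refine tendsto_order.2 ⟨fun b hb => .of_forall fun k => hb.trans_le (hw0 k), fun η hη => ?_⟩
  set l' := (1 + l) / 2 with hl'
  set c := (1 - l') * (η / 2) with hc
  have hl'1 : 0 < 1 - l' := by linarith
  have hgap : 0 < min (l' - l) c := lt_min (by linarith) (by positivity)
  obtain ⟨K, hK⟩ := eventually_atTop.1 (hδ.eventually (gt_mem_nhds hgap))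
  have htail : ∀ j, w (K + j + 1) ≤ l' * w (K + j) + c := fun j => by
    have hlt := lt_min_iff.1 (hK (K + j) le_self_add)
    have := hw0 (K + j)
    calc w (K + j + 1) ≤ l * w (K + j) + (δ (K + j) * w (K + j) + δ (K + j)) := by
          linarith [hw (K + j)]
      _ ≤ l * w (K + j) + ((l' - l) * w (K + j) + c) := by gcongr <;> linarith
      _ = l' * w (K + j) + c := by ring
  have hbound := le_pow_mul_add_div_of_le_mul_add (w := fun j => w (K + j)) (by linarith)
    (by linarith) htail
  have hlim : Tendsto (fun j => l' ^ j * (w K - η / 2) + η / 2) atTop (𝓝 (η / 2)) := by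
    simpa using ((tendsto_pow_atTop_nhds_zero_of_lt_one (by linarith) (by linarith)).mul_const
      (w K - η / 2)).add_const (η / 2)
  rw [hc, mul_div_cancel_left₀ _ hl'1.ne'] at hbound
  have hsmall := (tendsto_sub_atTop_nat K).eventually
    (hlim.eventually (gt_mem_nhds (half_lt_self hη)))
  filter_upwards [hsmall, eventually_ge_atTop K] with k hk hKk
  simpa only [add_tsub_cancel_of_le hKk] using (hbound (k - K)).trans_lt hk

theorem sqrt_max_sq_le (μ b : ℝ) (hb : 0 ≤ b) : √(max μ (b ^ 2)) ≤ √μ + b := by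
  have := Real.sqrt_nonneg μ
  rw [Real.sqrt_monotone.map_max, Real.sqrt_sq hb]
  exact max_le (by linarith) (by linarith)

theorem exists_sqrt_normalization_le {E F : Type*} [SeminormedAddCommGroup E]
    [SeminormedAddCommGroup F] (μ c : ℝ) {φ : ℕ → F} {x e y : ℕ → E} {M : ℝ}
    (hφ : ∀ k, ‖φ k‖ ≤ c * (1 + ‖x k‖)) (he : ∀ k, e k = x k - y k) (hy : ∀ k, ‖y k‖ ≤ M) :
    ∃ K, ∀ k, √(max μ (‖φ k‖ ^ 2)) ≤ K * (1 + ‖e k‖) := by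
  refine ⟨√μ + c * (1 + M), fun k => ?_⟩
  have hc : 0 ≤ c := nonneg_of_mul_nonneg_left ((norm_nonneg _).trans (hφ k)) (by positivity)
  have hM : 0 ≤ M := (norm_nonneg _).trans (hy k)
  have hx : ‖x k‖ ≤ ‖e k‖ + M := by
    rw [← sub_add_cancel (x k) (y k), ← he]
    exact norm_add_le_of_le le_rfl (hy k)
  calc √(max μ (‖φ k‖ ^ 2)) ≤ √μ + ‖φ k‖ := sqrt_max_sq_le μ _ (norm_nonneg _)
    _ ≤ √μ + c * (1 + (‖e k‖ + M)) := by grw [hφ k, hx]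
    _ ≤ √μ + c * (1 + (‖e k‖ + M)) + (√μ * ‖e k‖ + c * M * ‖e k‖) :=
        le_add_of_nonneg_right (by positivity)
    _ = (√μ + c * (1 + M)) * (1 + ‖e k‖) := by ring

section PowerSummable

variable {𝕜 E F : Type*} [NontriviallyNormedField 𝕜] [SeminormedAddCommGroup E] [NormedSpace 𝕜 E]
  [SeminormedAddCommGroup F] [NormedSpace 𝕜 F]

/-- The norm `∑ₖ ‖Tᵏ v‖` adapted to `T`: it is contracted by `T` when the powers of `T` are
summable. It has the junk value `0` when the series diverges. -/
noncomputable def orbitNorm (T : E →L[𝕜] E) (v : E) : ℝ := ∑' k, ‖(T ^ k) v‖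

variable {T : E →L[𝕜] E}

theorem summable_norm_pow_apply (hT : Summable fun k => ‖T ^ k‖) (v : E) :
    Summable fun k => ‖(T ^ k) v‖ :=
  .of_nonneg_of_le (fun _ => norm_nonneg _) (fun k => (T ^ k).le_opNorm v) (hT.mul_right ‖v‖)

theorem orbitNorm_nonneg (T : E →L[𝕜] E) (v : E) : 0 ≤ orbitNorm T v :=
  tsum_nonneg fun _ => norm_nonneg _

theorem norm_le_orbitNorm (hT : Summable fun k => ‖T ^ k‖) (v : E) : ‖v‖ ≤ orbitNorm T v := by
  calc ‖v‖ = ‖(T ^ 0) v‖ := by rw [pow_zero, one_apply_eq_self]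
    _ ≤ orbitNorm T v := (summable_norm_pow_apply hT v).le_tsum 0 fun _ _ => norm_nonneg _

theorem orbitNorm_le (hT : Summable fun k => ‖T ^ k‖) (v : E) :
    orbitNorm T v ≤ (∑' k, ‖T ^ k‖) * ‖v‖ := by
  rw [← tsum_mul_right]
  exact (summable_norm_pow_apply hT v).tsum_le_tsum (fun k => (T ^ k).le_opNorm v)
    (hT.mul_right ‖v‖)

theorem orbitNorm_add_le (hT : Summable fun k => ‖T ^ k‖) (v w : E) :
    orbitNorm T (v + w) ≤ orbitNorm T v + orbitNorm T w := by
  have hv := summable_norm_pow_apply hT v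
  have hw := summable_norm_pow_apply hT w
  rw [orbitNorm, orbitNorm, orbitNorm, ← hv.tsum_add hw]
  refine (summable_norm_pow_apply hT (v + w)).tsum_le_tsum (fun k => ?_) (hv.add hw)
  rw [map_add]
  exact norm_add_le _ _

theorem orbitNorm_apply (hT : Summable fun k => ‖T ^ k‖) (v : E) :
    orbitNorm T (T v) = orbitNorm T v - ‖v‖ := by
  have h := (summable_norm_pow_apply hT v).tsum_eq_zero_add
  simp only [pow_zero, one_apply_eq_self, pow_succ, mul_apply_eq_comp] at h
  rw [orbitNorm, orbitNorm, h, add_sub_cancel_left]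

theorem exists_orbitNorm_apply_le_mul (hT : Summable fun k => ‖T ^ k‖) :
    ∃ l, 0 ≤ l ∧ l < 1 ∧ ∀ v, orbitNorm T (T v) ≤ l * orbitNorm T v := by
  set C := ∑' k, ‖T ^ k‖
  have : 0 ≤ C := tsum_nonneg fun _ => norm_nonneg _
  refine ⟨C / (1 + C), by positivity, (div_lt_one (by positivity)).2 (by linarith), fun v => ?_⟩
  have hv := orbitNorm_le hT v
  have := norm_nonneg v
  rw [orbitNorm_apply hT, div_mul_eq_mul_div, le_div_iff₀ (by positivity)]
  linarith

theorem exists_norm_le_of_summable_norm_pow (hT : Summable fun k => ‖T ^ k‖) {x d : ℕ → E}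
    (hx : ∀ k, x (k + 1) = T (x k) + d k) {D : ℝ} (hd : ∀ k, ‖d k‖ ≤ D) :
    ∃ M, ∀ k, ‖x k‖ ≤ M := by
  obtain ⟨l, hl0, hl1, hl⟩ := exists_orbitNorm_apply_le_mul hT
  set C := ∑' k, ‖T ^ k‖
  have : 0 ≤ C := tsum_nonneg fun _ => norm_nonneg _
  have hrec : ∀ k, orbitNorm T (x (k + 1)) ≤ l * orbitNorm T (x k) + C * D := fun k => by
    rw [hx]
    grw [orbitNorm_add_le hT, hl, orbitNorm_le hT (d k), hd k]
  have hlim : Tendsto (fun k => l ^ k * (orbitNorm T (x 0) - C * D / (1 - l)) + C * D / (1 - l))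
      atTop (𝓝 (0 * (orbitNorm T (x 0) - C * D / (1 - l)) + C * D / (1 - l))) :=
    ((tendsto_pow_atTop_nhds_zero_of_lt_one hl0 hl1).mul_const _).add_const _
  obtain ⟨M, hM⟩ := hlim.bddAbove_range
  exact ⟨M, fun k => (norm_le_orbitNorm hT _).trans <|
    (le_pow_mul_add_div_of_le_mul_add (w := fun k => orbitNorm T (x k)) hl0 hl1 hrec k).trans
      (hM (Set.mem_range_self k))⟩

theorem tendsto_zero_of_summable_norm_pow (hT : Summable fun k => ‖T ^ k‖) {e d : ℕ → E}
    {δ : ℕ → ℝ} (he : ∀ k, e (k + 1) = T (e k) + d k) (hd : ∀ k, ‖d k‖ ≤ δ k * (1 + ‖e k‖))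
    (hδ : Tendsto δ atTop (𝓝 0)) : Tendsto e atTop (𝓝 0) := by
  obtain ⟨l, hl0, hl1, hl⟩ := exists_orbitNorm_apply_le_mul hT
  set C := ∑' k, ‖T ^ k‖
  have : 0 ≤ C := tsum_nonneg fun _ => norm_nonneg _
  have hδ0 : ∀ k, 0 ≤ δ k := fun k =>
    nonneg_of_mul_nonneg_left ((norm_nonneg _).trans (hd k)) (by positivity)
  have hrec : ∀ k, orbitNorm T (e (k + 1))
      ≤ l * orbitNorm T (e k) + C * δ k * (1 + orbitNorm T (e k)) := fun k => by
    have := hδ0 k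
    rw [he]
    grw [orbitNorm_add_le hT, hl, orbitNorm_le hT (d k), hd k, ← mul_assoc,
      norm_le_orbitNorm hT (e k)]
  refine squeeze_zero_norm (fun k => norm_le_orbitNorm hT (e k)) ?_
  exact tendsto_zero_of_le_mul_add hl0 hl1 (fun k => orbitNorm_nonneg T _)
    (by simpa using hδ.const_mul C) hrec

theorem tendsto_zero_of_normalized_input (hT : Summable fun k => ‖T ^ k‖) (B : F →L[𝕜] E)
    {e : ℕ → E} {v : ℕ → F} {N : ℕ → ℝ} {K : ℝ} (he : ∀ k, e (k + 1) = T (e k) + B (v k))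
    (hN : ∀ k, 0 < N k) (hNe : ∀ k, √(N k) ≤ K * (1 + ‖e k‖))
    (hv : Tendsto (fun k => ‖v k‖ ^ 2 / N k) atTop (𝓝 0)) : Tendsto e atTop (𝓝 0) := by
  refine tendsto_zero_of_summable_norm_pow (δ := fun k => ‖B‖ * √(‖v k‖ ^ 2 / N k) * K) hT he
    (fun k => ?_) ?_
  · calc ‖B (v k)‖ ≤ ‖B‖ * ‖v k‖ := B.le_opNorm _
      _ = ‖B‖ * (√(‖v k‖ ^ 2 / N k) * √(N k)) := by
          rw [← Real.sqrt_mul (by have := hN k; positivity), div_mul_cancel₀ _ (hN k).ne',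
            Real.sqrt_sq (norm_nonneg _)]
      _ ≤ ‖B‖ * (√(‖v k‖ ^ 2 / N k) * (K * (1 + ‖e k‖))) := by grw [hNe k]
      _ = ‖B‖ * √(‖v k‖ ^ 2 / N k) * K * (1 + ‖e k‖) := by ring
  · simpa only [Real.sqrt_zero, mul_zero, zero_mul] using
      ((hv.sqrt).const_mul ‖B‖).mul_const K

end PowerSummable

theorem summable_norm_pow_of_spectrum {A : Type*} [NormedRing A] [NormedAlgebra ℂ A]
    [CompleteSpace A] {a : A} (ha : ∀ z ∈ spectrum ℂ a, ‖z‖ < 1) : Summable fun k => ‖a ^ k‖ := by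
  rcases subsingleton_or_nontrivial A with hA | hA
  · simpa only [Subsingleton.elim (a ^ _) 0, norm_zero] using summable_zero
  obtain ⟨l, hl, hl1⟩ := ENNReal.lt_iff_exists_nnreal_btwn.1
    (spectrum.spectralRadius_lt_of_forall_lt a (r := 1) ha)
  have hgeom : ∀ᶠ k : ℕ in atTop, ‖a ^ k‖ ≤ (l : ℝ) ^ k := by
    filter_upwards [(spectrum.pow_nnnorm_pow_one_div_tendsto_nhds_spectralRadius a).eventually
      (gt_mem_nhds hl), eventually_gt_atTop 0] with k hk hk0
    rw [one_div] at hk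
    have := (ENNReal.rpow_inv_le_iff (by positivity)).1 hk.le
    rw [ENNReal.rpow_natCast] at this
    exact_mod_cast this
  refine .of_norm_bounded_eventually_nat
    (summable_geometric_of_lt_one l.coe_nonneg (by exact_mod_cast hl1)) ?_
  simpa only [norm_norm] using hgeom

open scoped Matrix.Norms.L2Operator in
theorem summable_norm_toEuclideanCLM_pow {n : Type*} [Fintype n] [DecidableEq n] {A : Matrix n n ℝ}
    (hA : ∀ z ∈ spectrum ℂ (A.map Complex.ofReal), ‖z‖ < 1) :
    Summable fun k => ‖toEuclideanCLM (𝕜 := ℝ) A ^ k‖ := by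
  have hcomplex : Summable fun k => A.map Complex.ofReal ^ k :=
    .of_norm (summable_norm_pow_of_spectrum hA)
  have hreal : Summable fun k => A ^ k := by
    refine (hcomplex.map Complex.reAddGroupHom.mapMatrix
      (continuous_id.matrix_map Complex.continuous_re)).congr fun k => ?_
    have hpow : A.map Complex.ofReal ^ k = (A ^ k).map Complex.ofReal :=
      (Matrix.map_pow A Complex.ofRealHom k).symm
    rw [Function.comp_apply, hpow]
    rfl
  simpa only [← l2_opNorm_toEuclideanCLM, map_pow] using summable_norm_iff.2 hreal

section Matrices

variable {m n ι : Type*} [Fintype m] [Fintype n] [Fintype ι]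

theorem norm_toLp_eq_sqrt (v : n → ℝ) : ‖toLp 2 v‖ = √(∑ i, v i ^ 2) := by
  simp only [EuclideanSpace.norm_eq, Real.norm_eq_abs, sq_abs]

theorem norm_toLp_sq (v : n → ℝ) : ‖toLp 2 v‖ ^ 2 = ∑ i, v i ^ 2 :=
  EuclideanSpace.real_norm_sq_eq (toLp 2 v)

theorem nonsing_inv_gram_mulVec [DecidableEq m] {B : Matrix n m ℝ}
    (hB : Function.Injective B.mulVec) (v : m → ℝ) : (Bᵀ * B)⁻¹ *ᵥ (Bᵀ *ᵥ (B *ᵥ v)) = v := by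
  have hunit : IsUnit (Bᵀ * B) := (PosDef.conjTranspose_mul_self B hB).isUnit
  rw [mulVec_mulVec, mulVec_mulVec, Matrix.mul_assoc,
    nonsing_inv_mul _ ((isUnit_iff_isUnit_det _).1 hunit), one_mulVec]

theorem tendsto_predictionError_sq_div_of_tuner {γ β : ℝ} (hγ : 0 < γ) (hβ : 0 < β)
    (hD : (1 + γ ^ 2) * β < 2) (hα : 0 < tunerRate γ β) {N : ℕ → ℝ} {φ : ℕ → ι → ℝ}
    {Θ Ξ Θbar : ℕ → Matrix m ι ℝ} {Θstar : Matrix m ι ℝ} {ε : ℕ → m → ℝ}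
    (hN : ∀ k, 0 < N k) (hφN : ∀ k, ‖toLp 2 (φ k)‖ ^ 2 ≤ N k)
    (hε : ∀ k, ε k = (Θ k - Θstar) *ᵥ φ k)
    (hΘbar : ∀ k, Θbar k = Θ k - (γ * β / N k) • vecMulVec (ε k) (φ k))
    (hΘ : ∀ k, Θ (k + 1) = Θbar k - β • (Θbar k - Ξ k))
    (hΞ : ∀ k, Ξ (k + 1) = Ξ k - (γ / N k) • vecMulVec
      ((Θ (k + 1) - Θ k) *ᵥ φ k + ε k) (φ k)) :
    Tendsto (fun k => ‖toLp 2 (ε k)‖ ^ 2 / N k) atTop (𝓝 0) := by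
  have hinner : ∀ (A : Matrix m ι ℝ) (v : ι → ℝ) (i : m),
      ⟪toLp 2 (A i), toLp 2 v⟫ = (A *ᵥ v) i := fun A v i => by
    rw [EuclideanSpace.inner_toLp_toLp, dotProduct_comm, star_trivial]
    rfl
  have hestimate : ∀ i k, toLp 2 ((Θ (k + 1) - Θstar) i) = tunerEstimate γ β (N k)
      (toLp 2 (φ k)) (toLp 2 ((Θ k - Θstar) i)) (toLp 2 ((Ξ k - Θstar) i)) := fun i k => by
    rw [tunerEstimate, tunerIntermediate, hinner, ← hε, hΘ, hΘbar]
    ext j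
    simp only [Matrix.sub_apply, Matrix.smul_apply, vecMulVec_apply, smul_eq_mul,
      PiLp.sub_apply, PiLp.smul_apply]
    ring
  have hauxiliary : ∀ i k, toLp 2 ((Ξ (k + 1) - Θstar) i) = tunerAuxiliary γ β (N k)
      (toLp 2 (φ k)) (toLp 2 ((Θ k - Θstar) i)) (toLp 2 ((Ξ k - Θstar) i)) := fun i k => by
    rw [tunerAuxiliary, ← hestimate, hinner, hΞ, hε, ← add_mulVec, sub_add_sub_cancel]
    ext j
    simp only [Matrix.sub_apply, Matrix.smul_apply, vecMulVec_apply, smul_eq_mul,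
      PiLp.sub_apply, PiLp.smul_apply]
    ring
  have hrow : ∀ i, Tendsto (fun k => ε k i ^ 2 / N k) atTop (𝓝 0) := fun i => by
    simpa only [hinner, ← hε] using
      tendsto_inner_sq_div_of_tuner (θ := fun k => toLp 2 ((Θ k - Θstar) i))
        (ξ := fun k => toLp 2 ((Ξ k - Θstar) i)) hγ hβ hD hα hN hφN (hestimate i) (hauxiliary i)
  simpa only [norm_toLp_sq, Finset.sum_div, Finset.sum_const_zero] using
    tendsto_finsetSum Finset.univ fun i _ => hrow i

end Matrices

theorem trackingError_succ {m n ι R : Type*} [Fintype m] [Fintype n] [Fintype ι] [CommRing R]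
    {Am : Matrix n n R} {B : Matrix n m R} {Θ Θstar : Matrix m ι R} {φ : ι → R} {u r : m → R}
    {x x' y y' : n → R} (hx : x' = Am *ᵥ x + B *ᵥ (u - Θstar *ᵥ φ)) (hu : u = Θ *ᵥ φ + r)
    (hy : y' = Am *ᵥ y + B *ᵥ r) :
    x' - y' = Am *ᵥ (x - y) + B *ᵥ ((Θ - Θstar) *ᵥ φ) := by
  rw [hx, hy, hu]
  simp only [mulVec_sub, mulVec_add, sub_mulVec]
  abel

/-- The true parameter `[K, a₁, …, aₚ]` of a plant with matching gain `K`. -/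
def matchedParameter {R m : Type*} {n p : ℕ} (K : Matrix m (Fin n) R) (a : Fin p → m → R) :
    Matrix m (Fin (n + p)) R :=
  of fun i => Fin.append (K i) fun j => a j i

theorem matchedParameter_mulVec_append_neg {R m : Type*} [CommRing R] {n p : ℕ}
    (K : Matrix m (Fin n) R) (a : Fin p → m → R) (x : Fin n → R) (y : Fin p → R) :
    matchedParameter K a *ᵥ Fin.append x (fun i => -y i) = K *ᵥ x - ∑ i, y i • a i := by
  ext i
  simp [matchedParameter, mulVec, dotProduct, Fin.sum_univ_add, sub_eq_add_neg, mul_comm]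

theorem norm_toLp_append_neg_le {n p : ℕ} (x : Fin n → ℝ) {y M : Fin p → ℝ}
    (hy : ∀ i, |y i| ≤ M i * ‖toLp 2 x‖) :
    ‖toLp 2 (Fin.append x fun i => -y i)‖ ≤ √(1 + ∑ i, M i ^ 2) * ‖toLp 2 x‖ := by
  have hsq : ∀ i, y i ^ 2 ≤ M i ^ 2 * ‖toLp 2 x‖ ^ 2 := fun i => by
    rw [← sq_abs, ← mul_pow]
    grw [hy i]
  refine le_of_sq_le_sq ?_ (by positivity)
  calc ‖toLp 2 (Fin.append x fun i => -y i)‖ ^ 2 = ‖toLp 2 x‖ ^ 2 + ∑ i, y i ^ 2 := by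
        simp only [norm_toLp_sq, Fin.sum_univ_add, Fin.append_left, Fin.append_right, neg_sq]
    _ ≤ ‖toLp 2 x‖ ^ 2 + ∑ i, M i ^ 2 * ‖toLp 2 x‖ ^ 2 := by
        gcongr with i
        exact hsq i
    _ = (√(1 + ∑ i, M i ^ 2) * ‖toLp 2 x‖) ^ 2 := by
        rw [mul_pow, Real.sq_sqrt (by positivity), ← Finset.sum_mul]
        ring

/-- The matching condition is absorbed into the plant: in the paper's notation,
`A_p x + B ∑ᵢ aᵢ fᵢ(x) = A_m x - B Θ⋆ φ`. -/
theorem hot_adaptive_control_tracking_error_to_zero_general {m n ι : Type*} [Fintype m]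
    [DecidableEq m] [Fintype n] [DecidableEq n] [Fintype ι]
    {Am : Matrix n n ℝ} {B : Matrix n m ℝ} {Θstar : Matrix m ι ℝ}
    (hB : Function.Injective B.mulVec)
    (hSchur : ∀ z ∈ spectrum ℂ (Am.map Complex.ofReal), ‖z‖ < 1)
    {r : ℕ → m → ℝ} {rmax : ℝ} (hr : ∀ k, ‖toLp 2 (r k)‖ ≤ rmax)
    {xp xm e : ℕ → n → ℝ} {u ε : ℕ → m → ℝ} {φ : ℕ → ι → ℝ} {c : ℝ}
    (hφ : ∀ k, ‖toLp 2 (φ k)‖ ≤ c * (1 + ‖toLp 2 (xp k)‖))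
    {Θhat Ξhat Θbar : ℕ → Matrix m ι ℝ}
    (hplant : ∀ k, xp (k + 1) = Am *ᵥ xp k + B *ᵥ (u k - Θstar *ᵥ φ k))
    (hu : ∀ k, u k = Θhat k *ᵥ φ k + r k)
    (href : ∀ k, xm (k + 1) = Am *ᵥ xm k + B *ᵥ r k)
    (he : ∀ k, e k = xp k - xm k)
    (hε : ∀ k, ε (k + 1) = (Bᵀ * B)⁻¹ *ᵥ (Bᵀ *ᵥ (e (k + 1) - Am *ᵥ e k)))
    {μ γ β : ℝ} (hμ : 0 < μ) (hβ : 0 < β) (hγ : 0 < γ) (hD : (1 + γ ^ 2) * β < 2)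
    (hα : 0 < tunerRate γ β) {N : ℕ → ℝ} (hN : ∀ k, N k = max μ (‖toLp 2 (φ k)‖ ^ 2))
    (hΘbar : ∀ k, Θbar k = Θhat k - (γ * β / N k) • vecMulVec (ε (k + 1)) (φ k))
    (hΘ : ∀ k, Θhat (k + 1) = Θbar k - β • (Θbar k - Ξhat k))
    (hΞ : ∀ k, Ξhat (k + 1) = Ξhat k - (γ / N k) • vecMulVec
      ((Θhat (k + 1) - Θhat k) *ᵥ φ k + ε (k + 1)) (φ k)) :
    Tendsto (fun k => ‖toLp 2 (e k)‖) atTop (𝓝 0) := by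
  have hT := summable_norm_toEuclideanCLM_pow hSchur
  set B' := (toEuclideanLin B).toContinuousLinearMap
  have herror : ∀ k, e (k + 1) = Am *ᵥ e k + B *ᵥ ((Θhat k - Θstar) *ᵥ φ k) := fun k => by
    rw [he, he, trackingError_succ (hplant k) (hu k) (href k)]
  have hprediction : ∀ k, ε (k + 1) = (Θhat k - Θstar) *ᵥ φ k := fun k => by
    rw [hε, herror, add_sub_cancel_left, nonsing_inv_gram_mulVec hB]
  have hNpos : ∀ k, 0 < N k := fun k => hN k ▸ lt_max_of_lt_left hμ
  have hsmall := tendsto_predictionError_sq_div_of_tuner hγ hβ hD hα hNpos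
    (fun k => hN k ▸ le_max_right _ _) hprediction hΘbar hΘ hΞ
  obtain ⟨M, hM⟩ := exists_norm_le_of_summable_norm_pow (x := fun k => toLp 2 (xm k))
    (d := fun k => B' (toLp 2 (r k))) hT (fun k => congrArg (toLp 2) (href k))
    fun k => B'.le_opNorm_of_le (hr k)
  obtain ⟨K, hK⟩ := exists_sqrt_normalization_le μ c hφ
    (fun k => congrArg (toLp 2) (he k)) hM
  have hlim := tendsto_zero_of_normalized_input (e := fun k => toLp 2 (e k))
    (v := fun k => toLp 2 (ε (k + 1))) hT B'
    (fun k => congrArg (toLp 2) (hprediction k ▸ herror k)) hNpos (fun k => hN k ▸ hK k) hsmall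
  simpa only [norm_zero] using hlim.norm

/-- adaptive control of the nonlinear plant with the high-order
    tuner adaptive law drives the tracking error to zero. -/
theorem hot_adaptive_control_tracking_error_to_zero {n m p : ℕ}
    (Ap Am : Matrix (Fin n) (Fin n) ℝ) (B : Matrix (Fin n) (Fin m) ℝ)
    (a : Fin p → Fin m → ℝ) (f : Fin p → (Fin n → ℝ) → ℝ) (Mf : Fin p → ℝ)
    (hB : Function.Injective B.mulVec)
    (hLip : ∀ i, ∀ x y : Fin n → ℝ,
      |f i x - f i y| ≤ Mf i * Real.sqrt (∑ j, (x j - y j) ^ 2))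
    (hf0 : ∀ i, f i 0 = 0)
    (hSchur : ∀ z ∈ spectrum ℂ (Am.map Complex.ofReal), ‖z‖ < 1)
    (Kstar : Matrix (Fin m) (Fin n) ℝ) (hmatch : Am = Ap + B * Kstar)
    (r : ℕ → Fin m → ℝ) (rmax : ℝ)
    (hr : ∀ k, Real.sqrt (∑ i, r k i ^ 2) ≤ rmax)
    (xp xm : ℕ → Fin n → ℝ) (u : ℕ → Fin m → ℝ)
    (Θhat Ξhat Θbar : ℕ → Matrix (Fin m) (Fin (n + p)) ℝ)
    (φ : ℕ → Fin (n + p) → ℝ)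
    (hφ : ∀ k, φ k = Fin.append (xp k) (fun i => -f i (xp k)))
    (hplant : ∀ k, xp (k + 1)
      = Ap.mulVec (xp k) + B.mulVec ((∑ i, f i (xp k) • a i) + u k))
    (hu : ∀ k, u k = (Θhat k).mulVec (φ k) + r k)
    (href : ∀ k, xm (k + 1) = Am.mulVec (xm k) + B.mulVec (r k))
    (e : ℕ → Fin n → ℝ) (he : ∀ k, e k = xp k - xm k)
    (ε : ℕ → Fin m → ℝ)
    (hεdef : ∀ k, ε (k + 1)
      = (Bᵀ * B)⁻¹.mulVec (Bᵀ.mulVec (e (k + 1) - Am.mulVec (e k))))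
    (μ γ β : ℝ) (hμ : 0 < μ) (hβ0 : 0 < β) (hβ2 : β < 2)
    (hγ0 : 0 < γ) (hγ : γ < Real.sqrt ((2 - β) / β))
    (hα : 0 < 2 * (1 - γ) - γ * (2 - 3 * β) ^ 2 / (β * (2 - (1 + γ ^ 2) * β)))
    (N : ℕ → ℝ) (hN : ∀ k, N k = max μ (∑ j, φ k j ^ 2))
    (hΘbar : ∀ k, Θbar k
      = Θhat k - (γ * β / N k) • Matrix.vecMulVec (ε (k + 1)) (φ k))
    (hΘ : ∀ k, Θhat (k + 1) = Θbar k - β • (Θbar k - Ξhat k))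
    (hΞ : ∀ k, Ξhat (k + 1) = Ξhat k - (γ / N k) • Matrix.vecMulVec
      ((Θhat (k + 1) - Θhat k).mulVec (φ k) + ε (k + 1)) (φ k))
    (hinit : Ξhat 0 = Θhat 0) :
    Filter.Tendsto (fun k => Real.sqrt (∑ i, e k i ^ 2))
      Filter.atTop (nhds 0) := by
  simp only [← norm_toLp_eq_sqrt] at hr ⊢
  simp only [← norm_toLp_sq] at hN
  refine hot_adaptive_control_tracking_error_to_zero_general (Θstar := matchedParameter Kstar a)
    (c := √(1 + ∑ i, Mf i ^ 2)) hB hSchur hr (fun k => ?_) (fun k => ?_) hu href he hεdef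
    hμ hβ0 hγ0 (one_add_sq_mul_lt_two hγ0.le hβ0 hγ) hα hN hΘbar hΘ hΞ
  · have hf := norm_toLp_append_neg_le (xp k) fun i => by
      simpa [hf0, ← norm_toLp_eq_sqrt] using hLip i (xp k) 0
    grw [hφ, hf]
    gcongr
    exact le_add_of_nonneg_left zero_le_one
  · rw [hplant, hφ, matchedParameter_mulVec_append_neg, hmatch, add_mulVec, ← mulVec_mulVec]
    simp only [mulVec_add, mulVec_sub]
    abel
end
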